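/- Tweedie's formula for the Gaussian-corrupted diffusion frame (one-dimensional): let μ be a probability measure on ℝ with finite first moment (the law of the clean value X), let ᾱ ∈ (0, 1), and on the product probability space ℝ × ℝ with measure μ ⊗ (gaussianReal 0 1) set X(x, z) = x, Z(x, z) = z, and Y = √ᾱ·X + √(1−ᾱ)·Z. Define the marginal density p(y) = ∫ (2π(1−ᾱ))^{−1/2}·exp(−(y − √ᾱ·x)²/(2(1−ᾱ))) dμ(x). Then p is everywhere positive and differentiable on ℝ, and the conditional expectation of X given the σ-algebra generated by Y satisfies E[X | Y] = (Y + (1−ᾱ)·p'(Y)/p(Y)) / √ᾱ almost surely; that is, the Tweedie (posterior-mean) denoised estimate of the clean frame is obtained from the noisy frame and the score of its marginal density. -/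

import Mathlib

open MeasureTheory ProbabilityTheory

/-!
For noise of variance `v`, differentiating the density `p y = ∫ s, φ(y - s)` of `Y = S + N` under
the integral gives `v * p' y = ∫ s, (s - y) * φ(y - s)`, since `v * φ' u = -u * φ u` for the
centred Gaussian density `φ`. By Bayes' formula the right-hand side divided by `p y` is
`E[S | Y = y] - y`, so that `E[S | Y] = Y + v * p' Y / p Y`; take `S = √ᾱ X`, `v = 1 - ᾱ`.
Both `φ u` and `u * φ u` are bounded, so no moment of `S` is needed to differentiate.
-/

open scoped ENNReal NNReal

section WithDensity

variable {Ω 𝓧 : Type*} [MeasurableSpace Ω] [MeasurableSpace 𝓧]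

theorem map_withDensity_comp_of_measurePreserving {μ : Measure Ω} {ν : Measure 𝓧} {T : Ω → 𝓧}
    (hT : MeasurePreserving T μ ν) {h : 𝓧 → ℝ≥0∞} (hh : Measurable h) :
    (μ.withDensity (h ∘ T)).map T = ν.withDensity h := by
  ext s hs
  rw [Measure.map_apply hT.measurable hs, withDensity_apply _ (hT.measurable hs),
    withDensity_apply _ hs]
  exact hT.setLIntegral_comp_preimage hs hh

variable {E : Type*} [NormedAddCommGroup E] [NormedSpace ℝ E]
  {P : Measure Ω} {ρ : Measure 𝓧} {T : Ω → 𝓧} {k : 𝓧 → ℝ} {f : 𝓧 → E}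

theorem integrable_comp_iff_of_map_eq_withDensity (hT : AEMeasurable T P) (hk : Measurable k)
    (hk0 : 0 ≤ k) (hlaw : P.map T = ρ.withDensity fun x => ENNReal.ofReal (k x))
    (hf : StronglyMeasurable f) :
    Integrable (fun ω => f (T ω)) P ↔ Integrable (fun x => k x • f x) ρ := by
  have hmap := integrable_map_measure (f := T) (hf.aestronglyMeasurable (μ := P.map T)) hT
  rw [hlaw, integrable_withDensity_iff_integrable_smul' hk.ennreal_ofReal (by simp)] at hmap
  simpa only [ENNReal.toReal_ofReal (hk0 _), Function.comp_def] using hmap.symm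

theorem integrable_of_map_eq_withDensity [IsFiniteMeasure P] (hT : AEMeasurable T P)
    (hk : Measurable k) (hk0 : 0 ≤ k)
    (hlaw : P.map T = ρ.withDensity fun x => ENNReal.ofReal (k x)) : Integrable k ρ := by
  simpa using (integrable_comp_iff_of_map_eq_withDensity hT hk hk0 hlaw
    (stronglyMeasurable_const (b := (1 : ℝ)))).1 (integrable_const 1)

theorem setIntegral_comp_of_map_eq_withDensity (hT : AEMeasurable T P) (hk : Measurable k)
    (hk0 : 0 ≤ k) (hlaw : P.map T = ρ.withDensity fun x => ENNReal.ofReal (k x))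
    (hf : StronglyMeasurable f) {s : Set 𝓧} (hs : MeasurableSet s) :
    ∫ ω in T ⁻¹' s, f (T ω) ∂P = ∫ x in s, k x • f x ∂ρ := by
  rw [← setIntegral_map hs hf.aestronglyMeasurable hT, hlaw,
    setIntegral_withDensity_eq_setIntegral_toReal_smul hk.ennreal_ofReal (by simp) _ hs]
  simp only [ENNReal.toReal_ofReal (hk0 _)]

end WithDensity

section Bayes

variable {Ω 𝓧 𝓨 E : Type*} [MeasurableSpace Ω] [MeasurableSpace 𝓧] [MeasurableSpace 𝓨]
  [NormedAddCommGroup E] [NormedSpace ℝ E]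

theorem integral_smul_inv_smul_integral_smul {μ : Measure 𝓧} {w : 𝓧 → ℝ} (hw : Integrable w μ)
    (hw0 : 0 ≤ w) (f : 𝓧 → E) :
    (∫ x, w x ∂μ) • (∫ x, w x ∂μ)⁻¹ • ∫ x, w x • f x ∂μ = ∫ x, w x • f x ∂μ := by
  by_cases h : ∫ x, w x ∂μ = 0
  · have hw_ae : w =ᵐ[μ] 0 := (integral_eq_zero_iff_of_nonneg hw0 hw).1 h
    have hwf_ae : (fun x => w x • f x) =ᵐ[μ] 0 := hw_ae.mono fun x hx => by simp [hx]
    rw [h, zero_smul, integral_eq_zero_of_ae hwf_ae]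
  · exact smul_inv_smul₀ h _

variable {P : Measure Ω} {μ : Measure 𝓧} {l : Measure 𝓨} {X : Ω → 𝓧} {Y : Ω → 𝓨} {k : 𝓧 × 𝓨 → ℝ}
  [SFinite μ] [SFinite l]

theorem map_snd_withDensity_prod (hk : Measurable k) (hk0 : 0 ≤ k) (hki : Integrable k (μ.prod l)) :
    ((μ.prod l).withDensity fun q => ENNReal.ofReal (k q)).map Prod.snd =
      l.withDensity fun y => ENNReal.ofReal (∫ x, k (x, y) ∂μ) := by
  have hae : (fun y => ENNReal.ofReal (∫ x, k (x, y) ∂μ)) =ᵐ[l]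
      fun y => ∫⁻ x, ENNReal.ofReal (k (x, y)) ∂μ := by
    filter_upwards [hki.prod_left_ae] with y hy
    exact ofReal_integral_eq_lintegral_ofReal hy (.of_forall fun x => hk0 (x, y))
  rw [withDensity_congr_ae hae]
  ext s hs
  rw [Measure.map_apply measurable_snd hs, withDensity_apply _ (measurable_snd hs),
    withDensity_apply _ hs, ← Set.univ_prod, ← Measure.prod_restrict, Measure.restrict_univ,
    lintegral_prod_symm' _ hk.ennreal_ofReal]

theorem map_eq_withDensity_of_map_prodMk_eq_withDensity [IsFiniteMeasure P]
    (hX : Measurable X) (hY : Measurable Y) (hk : Measurable k) (hk0 : 0 ≤ k)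
    (hlaw : P.map (fun ω => (X ω, Y ω)) = (μ.prod l).withDensity fun q => ENNReal.ofReal (k q)) :
    P.map Y = l.withDensity fun y => ENNReal.ofReal (∫ x, k (x, y) ∂μ) := by
  have hXY : Measurable fun ω => (X ω, Y ω) := hX.prodMk hY
  rw [← map_snd_withDensity_prod hk hk0
    (integrable_of_map_eq_withDensity hXY.aemeasurable hk hk0 hlaw), ← hlaw,
    Measure.map_map measurable_snd hXY]
  rfl

variable {f : 𝓧 → E}

theorem setIntegral_preimage_of_map_prodMk_eq_withDensity
    (hX : Measurable X) (hY : Measurable Y) (hk : Measurable k) (hk0 : 0 ≤ k)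
    (hlaw : P.map (fun ω => (X ω, Y ω)) = (μ.prod l).withDensity fun q => ENNReal.ofReal (k q))
    (hf : StronglyMeasurable f) (hkf : Integrable (fun q : 𝓧 × 𝓨 => k q • f q.1) (μ.prod l))
    {B : Set 𝓨} (hB : MeasurableSet B) :
    ∫ ω in Y ⁻¹' B, f (X ω) ∂P = ∫ y in B, ∫ x, k (x, y) • f x ∂μ ∂l := by
  have hrect : Y ⁻¹' B = (fun ω => (X ω, Y ω)) ⁻¹' (Set.univ ×ˢ B) := by
    simp only [Set.mk_preimage_prod, Set.preimage_univ, Set.univ_inter]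
  have hf_fst : StronglyMeasurable fun q : 𝓧 × 𝓨 => f q.1 := hf.comp_measurable measurable_fst
  rw [hrect, setIntegral_comp_of_map_eq_withDensity (hX.prodMk hY).aemeasurable hk hk0 hlaw
    hf_fst (MeasurableSet.univ.prod hB), ← Measure.prod_restrict, Measure.restrict_univ]
  exact integral_prod_symm _ (hkf.mono_measure (Measure.prod_mono le_rfl Measure.restrict_le_self))

theorem condExp_comap_ae_eq_of_map_prodMk_eq_withDensity [CompleteSpace E] [IsFiniteMeasure P]
    (hX : Measurable X) (hY : Measurable Y) (hk : Measurable k) (hk0 : 0 ≤ k)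
    (hlaw : P.map (fun ω => (X ω, Y ω)) = (μ.prod l).withDensity fun q => ENNReal.ofReal (k q))
    (hf : StronglyMeasurable f) (hfX : Integrable (fun ω => f (X ω)) P) :
    P[fun ω => f (X ω) | MeasurableSpace.comap Y inferInstance] =ᵐ[P]
      fun ω => (∫ x, k (x, Y ω) ∂μ)⁻¹ • ∫ x, k (x, Y ω) • f x ∂μ := by
  set p : 𝓨 → ℝ := fun y => ∫ x, k (x, y) ∂μ
  set g : 𝓨 → E := fun y => ∫ x, k (x, y) • f x ∂μ
  have hXY : AEMeasurable (fun ω => (X ω, Y ω)) P := (hX.prodMk hY).aemeasurable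
  have hf_fst : StronglyMeasurable fun q : 𝓧 × 𝓨 => f q.1 := hf.comp_measurable measurable_fst
  have hkf : Integrable (fun q : 𝓧 × 𝓨 => k q • f q.1) (μ.prod l) :=
    (integrable_comp_iff_of_map_eq_withDensity hXY hk hk0 hlaw hf_fst).1 hfX
  have hp : Measurable p := hk.stronglyMeasurable.integral_prod_left'.measurable
  have hp0 : 0 ≤ p := fun y => integral_nonneg fun x => hk0 (x, y)
  have hm : StronglyMeasurable fun y => (p y)⁻¹ • g y :=
    hp.inv.stronglyMeasurable.smul (hk.stronglyMeasurable.smul hf_fst).integral_prod_left'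
  have hlawY := map_eq_withDensity_of_map_prodMk_eq_withDensity hX hY hk hk0 hlaw
  have hcancel : (fun y => p y • (p y)⁻¹ • g y) =ᵐ[l] g := by
    filter_upwards [(integrable_of_map_eq_withDensity hXY hk hk0 hlaw).prod_left_ae] with y hy
    exact integral_smul_inv_smul_integral_smul hy (fun x => hk0 (x, y)) f
  have hmY : Integrable (fun ω => (p (Y ω))⁻¹ • g (Y ω)) P :=
    (integrable_comp_iff_of_map_eq_withDensity hY.aemeasurable hp hp0 hlawY hm).2
      (hkf.integral_prod_right.congr hcancel.symm)
  refine (ae_eq_condExp_of_forall_setIntegral_eq hY.comap_le hfX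
    (fun _ _ _ => hmY.integrableOn) ?_
    (hm.comp_measurable (comap_measurable Y)).aestronglyMeasurable).symm
  rintro _ ⟨B, hB, rfl⟩ -
  calc ∫ ω in Y ⁻¹' B, (p (Y ω))⁻¹ • g (Y ω) ∂P
      = ∫ y in B, p y • (p y)⁻¹ • g y ∂l :=
        setIntegral_comp_of_map_eq_withDensity hY.aemeasurable hp hp0 hlawY hm hB
    _ = ∫ y in B, g y ∂l := integral_congr_ae (ae_restrict_of_ae hcancel)
    _ = ∫ ω in Y ⁻¹' B, f (X ω) ∂P :=
        (setIntegral_preimage_of_map_prodMk_eq_withDensity hX hY hk hk0 hlaw hf hkf hB).symm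

end Bayes

section AdditiveNoise

variable {G : Type*} [AddGroup G] [MeasurableSpace G] [MeasurableAdd₂ G] [MeasurableNeg G]

theorem map_shear_prod_withDensity (μ l : Measure G) [SFinite μ] [SFinite l]
    [l.IsAddLeftInvariant] {g : G → ℝ≥0∞} (hg : Measurable g) :
    (μ.prod (l.withDensity g)).map (fun q => (q.1, q.1 + q.2)) =
      (μ.prod l).withDensity fun q => g (-q.1 + q.2) := by
  have hdensity : (fun q : G × G => g q.2) =
      (fun q => g (-q.1 + q.2)) ∘ fun q => (q.1, q.1 + q.2) := by
    simp only [Function.comp_def, neg_add_cancel_left]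
  rw [prod_withDensity_right hg, hdensity]
  exact map_withDensity_comp_of_measurePreserving (measurePreserving_prod_add μ l) (by fun_prop)

theorem map_prodMk_add_eq_withDensity_of_indepFun {Ω : Type*} [MeasurableSpace Ω] {P : Measure Ω}
    [IsFiniteMeasure P] {S N : Ω → G} (hS : AEMeasurable S P) (hN : AEMeasurable N P)
    (hSN : S ⟂ᵢ[P] N) {l : Measure G} [SFinite l] [l.IsAddLeftInvariant] {g : G → ℝ≥0∞}
    (hg : Measurable g) (hlaw : P.map N = l.withDensity g) :
    P.map (fun ω => (S ω, S ω + N ω)) =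
      ((P.map S).prod l).withDensity fun q => g (-q.1 + q.2) := by
  rw [← map_shear_prod_withDensity _ l hg, ← hlaw, ← hSN.map_prod_eq_prod_map_map hS hN,
    AEMeasurable.map_map_of_aemeasurable (by fun_prop) (hS.prodMk hN)]
  rfl

end AdditiveNoise

section GaussianDensity

theorem mul_exp_neg_sq_le (u : ℝ) : u * Real.exp (-u ^ 2) ≤ 2⁻¹ := by
  rw [Real.exp_neg, ← div_eq_mul_inv, div_le_iff₀ (Real.exp_pos _)]
  linarith [Real.add_one_le_exp (u ^ 2), sq_nonneg (u - 1)]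

variable (m : ℝ) (v : ℝ≥0) (y : ℝ)

theorem gaussianPDFReal_eq_rpow_mul_exp : gaussianPDFReal m v y =
    (2 * Real.pi * v) ^ (-(1 : ℝ) / 2) * Real.exp (-(y - m) ^ 2 / (2 * v)) := by
  rw [gaussianPDFReal, neg_div (2 : ℝ) 1, Real.rpow_neg (by positivity), ← Real.sqrt_eq_rpow]

theorem gaussianPDFReal_le : gaussianPDFReal m v y ≤ (√(2 * Real.pi * v))⁻¹ := by
  rw [gaussianPDFReal]
  refine mul_le_of_le_one_right (by positivity) (Real.exp_le_one_iff.2 ?_)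
  exact div_nonpos_of_nonpos_of_nonneg (neg_nonpos.2 (sq_nonneg _)) (by positivity)

theorem abs_sub_mul_gaussianPDFReal_le : |(m - y) * gaussianPDFReal m v y| ≤ (2 * √Real.pi)⁻¹ := by
  set u : ℝ := |m - y| / √(2 * v)
  have hu : (y - m) ^ 2 / (2 * v) = u ^ 2 := by
    rw [div_pow, sq_abs, Real.sq_sqrt (by positivity), sub_sq_comm]
  calc |(m - y) * gaussianPDFReal m v y| = u * Real.exp (-u ^ 2) / √Real.pi := by
        rw [abs_mul, abs_of_nonneg (gaussianPDFReal_nonneg m v y), gaussianPDFReal, neg_div, hu,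
          mul_right_comm, Real.sqrt_mul (by positivity)]
        simp only [u]
        ring
    _ ≤ 2⁻¹ / √Real.pi := by
        gcongr
        exact mul_exp_neg_sq_le u
    _ = (2 * √Real.pi)⁻¹ := by rw [mul_inv, div_eq_mul_inv]

theorem hasDerivAt_gaussianPDFReal :
    HasDerivAt (gaussianPDFReal m v) ((m - y) * gaussianPDFReal m v y / v) y := by
  have hexponent : HasDerivAt (fun y : ℝ => -(y - m) ^ 2 / (2 * v)) ((m - y) / v) y := by
    refine ((((hasDerivAt_id' y).sub_const m).fun_pow 2).fun_neg.div_const _).congr_deriv ?_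
    push_cast
    ring
  rw [gaussianPDFReal_def]
  exact (hexponent.exp.const_mul _).congr_deriv (by ring)

end GaussianDensity

/-- The density of the mixture of the Gaussians of variance `v` whose means are distributed
according to `μ`, that is of the convolution of `μ` with the centred Gaussian of variance `v`. -/
noncomputable def gaussianMixturePDFReal (μ : Measure ℝ) (v : ℝ≥0) (y : ℝ) : ℝ :=
  ∫ m, gaussianPDFReal m v y ∂μ

theorem gaussianMixturePDFReal_map {Ω : Type*} [MeasurableSpace Ω] {P : Measure Ω} {S : Ω → ℝ}
    (hS : AEMeasurable S P) (v : ℝ≥0) (y : ℝ) :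
    gaussianMixturePDFReal (P.map S) v y = ∫ ω, gaussianPDFReal (S ω) v y ∂P :=
  integral_map hS (by fun_prop)

section GaussianMixture

variable (μ : Measure ℝ) [IsFiniteMeasure μ] (v : ℝ≥0) (y : ℝ)

theorem integrable_gaussianPDFReal_mean : Integrable (fun m => gaussianPDFReal m v y) μ := by
  refine .of_bound (by fun_prop) (√(2 * Real.pi * v))⁻¹ (.of_forall fun m => ?_)
  rw [Real.norm_of_nonneg (gaussianPDFReal_nonneg m v y)]
  exact gaussianPDFReal_le m v y

theorem integrable_sub_mul_gaussianPDFReal_mean :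
    Integrable (fun m => (m - y) * gaussianPDFReal m v y) μ :=
  .of_bound (by fun_prop) (2 * √Real.pi)⁻¹
    (.of_forall fun m => abs_sub_mul_gaussianPDFReal_le m v y)

variable {v} in
theorem gaussianMixturePDFReal_pos [NeZero μ] (hv : v ≠ 0) : 0 < gaussianMixturePDFReal μ v y := by
  refine (integral_pos_iff_support_of_nonneg (fun m => gaussianPDFReal_nonneg m v y)
    (integrable_gaussianPDFReal_mean μ v y)).2 ?_
  rw [Function.support_eq_univ fun m => (gaussianPDFReal_pos m v y hv).ne']
  exact NeZero.pos _

theorem hasDerivAt_gaussianMixturePDFReal :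
    HasDerivAt (gaussianMixturePDFReal μ v)
      ((∫ m, (m - y) * gaussianPDFReal m v y ∂μ) / v) y := by
  rw [← integral_div]
  refine (hasDerivAt_integral_of_dominated_loc_of_deriv_le Filter.univ_mem
    (.of_forall fun y => (integrable_gaussianPDFReal_mean μ v y).aestronglyMeasurable)
    (integrable_gaussianPDFReal_mean μ v y)
    ((integrable_sub_mul_gaussianPDFReal_mean μ v y).div_const v).aestronglyMeasurable
    (bound := fun _ => (2 * √Real.pi)⁻¹ / v) (.of_forall fun m z _ => ?_)
    (integrable_const _) (.of_forall fun m z _ => hasDerivAt_gaussianPDFReal m v z)).2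
  rw [norm_div, Real.norm_of_nonneg v.coe_nonneg, Real.norm_eq_abs]
  gcongr
  exact abs_sub_mul_gaussianPDFReal_le m v z

variable {v} in
theorem integral_gaussianPDFReal_mul_mean (hv : v ≠ 0) :
    ∫ m, gaussianPDFReal m v y * m ∂μ =
      y * gaussianMixturePDFReal μ v y + v * deriv (gaussianMixturePDFReal μ v) y := by
  rw [(hasDerivAt_gaussianMixturePDFReal μ v y).deriv, mul_div_cancel₀ _ (NNReal.coe_ne_zero.2 hv),
    gaussianMixturePDFReal, ← integral_const_mul,
    ← integral_add ((integrable_gaussianPDFReal_mean μ v y).const_mul y)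
      (integrable_sub_mul_gaussianPDFReal_mean μ v y)]
  congr with m
  ring

variable {v} in
theorem inv_mul_integral_gaussianPDFReal_mul_mean_eq_add_logDeriv [NeZero μ] (hv : v ≠ 0) :
    (gaussianMixturePDFReal μ v y)⁻¹ * ∫ m, gaussianPDFReal m v y * m ∂μ =
      y + v * logDeriv (gaussianMixturePDFReal μ v) y := by
  have hpos := gaussianMixturePDFReal_pos μ y hv
  rw [integral_gaussianPDFReal_mul_mean μ y hv, logDeriv_apply]
  field_simp

end GaussianMixture

section Tweedie

variable {Ω : Type*} [MeasurableSpace Ω] {P : Measure Ω}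

theorem hasLaw_sqrt_mul_gaussianReal {Z : Ω → ℝ} (hZ : HasLaw Z (gaussianReal 0 1) P)
    (v : ℝ≥0) :
    HasLaw (fun ω => √v * Z ω) (gaussianReal 0 v) P := by
  convert gaussianReal_const_mul hZ √v using 2
  · rw [mul_zero]
  · ext; simp

theorem map_prodMk_add_gaussianReal [IsFiniteMeasure P] {S N : Ω → ℝ} (hS : AEMeasurable S P)
    {v : ℝ≥0} (hv : v ≠ 0) (hN : HasLaw N (gaussianReal 0 v) P) (hSN : S ⟂ᵢ[P] N) :
    P.map (fun ω => (S ω, S ω + N ω)) = ((P.map S).prod volume).withDensity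
      fun q => ENNReal.ofReal (gaussianPDFReal q.1 v q.2) := by
  rw [map_prodMk_add_eq_withDensity_of_indepFun hS hN.aemeasurable hSN
    (measurable_gaussianPDF 0 v) (hN.map_eq.trans (gaussianReal_of_var_ne_zero 0 hv))]
  simp only [gaussianPDF, neg_add_eq_sub, gaussianPDFReal_sub, zero_add]

theorem condExp_comap_add_gaussianReal_ae_eq [IsProbabilityMeasure P] {S N : Ω → ℝ}
    (hS : Measurable S) (hSi : Integrable S P) (hNm : Measurable N) {v : ℝ≥0} (hv : v ≠ 0)
    (hN : HasLaw N (gaussianReal 0 v) P) (hSN : S ⟂ᵢ[P] N) :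
    P[S | MeasurableSpace.comap (fun ω => S ω + N ω) inferInstance] =ᵐ[P]
      fun ω => S ω + N ω + v * logDeriv (gaussianMixturePDFReal (P.map S) v) (S ω + N ω) := by
  have := Measure.isProbabilityMeasure_map (μ := P) hS.aemeasurable
  refine (condExp_comap_ae_eq_of_map_prodMk_eq_withDensity hS (hS.add hNm)
    (k := fun q => gaussianPDFReal q.1 v q.2) (by fun_prop)
    (fun q => gaussianPDFReal_nonneg q.1 v q.2)
    (map_prodMk_add_gaussianReal hS.aemeasurable hv hN hSN)
    stronglyMeasurable_id hSi).trans (.of_forall fun ω => ?_)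
  exact inv_mul_integral_gaussianPDFReal_mul_mean_eq_add_logDeriv (P.map S) (S ω + N ω) hv

end Tweedie

theorem tweedie_formula_general {Ω : Type*} [MeasurableSpace Ω] {P : Measure Ω}
    [IsProbabilityMeasure P] {μ : Measure ℝ} {X Z : Ω → ℝ} (hX : MeasurePreserving X P μ)
    (hZ : MeasurePreserving Z P (gaussianReal 0 1)) (hXZ : X ⟂ᵢ[P] Z)
    (hμ : Integrable (fun x : ℝ => x) μ) {a v : ℝ} (ha : a ≠ 0) (hv : 0 < v) :
    let Y : Ω → ℝ := fun ω => a * X ω + √v * Z ω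
    let pd : ℝ → ℝ := fun y =>
      ∫ x, (2 * Real.pi * v) ^ (-(1 : ℝ) / 2) * Real.exp (-(y - a * x) ^ 2 / (2 * v)) ∂μ
    (∀ y : ℝ, 0 < pd y) ∧ Differentiable ℝ pd ∧
      P[X | MeasurableSpace.comap Y inferInstance]
        =ᵐ[P] fun ω => (Y ω + v * deriv pd (Y ω) / pd (Y ω)) / a := by
  intro Y pd
  lift v to ℝ≥0 using hv.le
  have hv0 : v ≠ 0 := NNReal.coe_ne_zero.1 hv.ne'
  have hlaw : P.map (fun ω => a * X ω) = μ.map (a * ·) := by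
    rw [← hX.map_eq, Measure.map_map (by fun_prop) hX.measurable]
    rfl
  have hpd : pd = gaussianMixturePDFReal (P.map fun ω => a * X ω) v := by
    funext y
    rw [hlaw, gaussianMixturePDFReal_map (by fun_prop)]
    simp only [pd, gaussianPDFReal_eq_rpow_mul_exp]
  have hXi : Integrable X P := hX.integrable_comp_of_integrable hμ
  have htweedie := condExp_comap_add_gaussianReal_ae_eq (hX.measurable.const_mul a)
    (hXi.const_mul a) (hZ.measurable.const_mul √v) hv0
    (hasLaw_sqrt_mul_gaussianReal ⟨hZ.aemeasurable, hZ.map_eq⟩ v)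
    (hXZ.comp (measurable_const_mul a) (measurable_const_mul √v))
  rw [← hpd] at htweedie
  have := Measure.isProbabilityMeasure_map (μ := P) (hX.measurable.const_mul a).aemeasurable
  refine ⟨fun y => hpd ▸ gaussianMixturePDFReal_pos _ y hv0,
    hpd ▸ fun y => (hasDerivAt_gaussianMixturePDFReal _ v y).differentiableAt, ?_⟩
  filter_upwards [htweedie, condExp_smul a X (MeasurableSpace.comap Y inferInstance)]
    with ω hω hsmul
  rw [eq_div_iff ha, mul_comm, mul_div_assoc, ← logDeriv_apply]
  exact hsmul.symm.trans hω

/-- Tweedie's formula for the Gaussian-corrupted diffusion frame (1D): with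
clean value `X ~ μ` (finite first moment), `Y = √ᾱ·X + √(1−ᾱ)·Z` for an
independent standard Gaussian `Z`, and marginal density
`p(y) = ∫ (2π(1−ᾱ))^{−1/2}·exp(−(y − √ᾱ·x)²/(2(1−ᾱ))) dμ(x)`, the density `p`
is positive and differentiable, and the posterior mean of the clean value is
`E[X | Y] = (Y + (1−ᾱ)·p'(Y)/p(Y)) / √ᾱ` almost surely. -/
theorem tweedie_formula
    (μ : Measure ℝ) [IsProbabilityMeasure μ]
    (hμ : Integrable (fun x : ℝ => x) μ)
    (α : ℝ) (hα0 : 0 < α) (hα1 : α < 1) :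
    let ν : Measure (ℝ × ℝ) := μ.prod (gaussianReal 0 1)
    let X : ℝ × ℝ → ℝ := fun p => p.1
    let Y : ℝ × ℝ → ℝ := fun p =>
      Real.sqrt α * p.1 + Real.sqrt (1 - α) * p.2
    let pd : ℝ → ℝ := fun y =>
      ∫ x, (2 * Real.pi * (1 - α)) ^ (-(1 : ℝ) / 2) *
        Real.exp (-(y - Real.sqrt α * x) ^ 2 / (2 * (1 - α))) ∂μ
    (∀ y : ℝ, 0 < pd y) ∧ Differentiable ℝ pd ∧
      ν[X | MeasurableSpace.comap Y inferInstance]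
        =ᵐ[ν] fun p => (Y p + (1 - α) * deriv pd (Y p) / pd (Y p)) / Real.sqrt α :=
  tweedie_formula_general measurePreserving_fst measurePreserving_snd
    (indepFun_prod measurable_id measurable_id) hμ (Real.sqrt_pos.2 hα0).ne' (sub_pos.2 hα1)
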